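/- If the cubic monotone 3-CNF φ has a one-in-three model, then for every τ ∈ σ2 the union U^{σ2}_φ has both the τ-ESSP and the τ-SSP. -/

import Mathlib

/-!
Every member of the union is a chain, so the region condition is checked edge by edge, and there are
only ten shapes of chains (`tmpl`).  All regions below use only the interactions `nop`, `set`, `swap`,
`used`, which belong to every `τ ∈ σ2`, and are presented as a `Pattern`: a signature together with
support values depending on the position on each chain.  An event signed `used` is inhibited exactly
where the support is `0`, so for an event `e` and a state `s` at which `e` does not occur one needs a
pattern with `sig e = used` whose support is `1` at all occurrences of `e` and `0` at `s`.

* If `e` does not occur on the chain of `s`, the support vanishing exactly on that chain works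
  (`absent_inhibits`).
* Since chains are acyclic, every set of events may be swapped, the support along a chain then being
  the parity of the number of swapped edges passed.  Swapping a single event `f` inhibits `e` at every
  state separated from the occurrences of `e` by an odd number of `f`-edges, as long as no two
  occurrences of `e` on a common chain are separated in this way (`single_inhibits`, `mev_inhibits`).
* On the chains `G_j`, `D_ℓ` and `T_{i,0}` an event may occur twice in a row, which parity cannot
  see.  There one of the two edges is one-way, and signing the event `set` lets the support pass from
  `0` to `1` across that edge (`dropPattern`, `risePattern`, `zPattern`).
* For `e = k` parity is mostly unavailable, as `k` occurs near both ends of most chains.  The states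
  in question are covered by `qPattern`, `dPattern`, `gPattern` and by `keyPattern`, the only region
  that depends on the one-in-three model: it signs `k` with `used`, the events `m` and `v_j` with
  `swap` and exactly the variables of the model with `set`.  On `T_{i,0}` the support drops from `1`
  to `0` once, at the unique model variable of the clause, and is restored by `v_{4i}`.

That these cases are exhaustive is a finite statement about the ten templates, `essp_cases`, which the
kernel evaluates.  The state separation property follows in the same way from `ssp_cases`.
-/

namespace PetriNets

/-- The eight boolean interactions. -/
inductive Interaction : Type
  | nop | inp | out | set | res | swap | used | free
  deriving DecidableEq

/-- The partial function on `{0,1}` (encoded as `Bool`) denoted by an interaction. -/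
def Interaction.apply : Interaction → Bool → Option Bool
  | .nop, x => some x
  | .inp, x => if x then some false else none
  | .out, x => if x then none else some true
  | .set, _ => some true
  | .res, _ => some false
  | .swap, x => some (!x)
  | .used, x => if x then some true else none
  | .free, x => if x then none else some false

/-- A transition system with states `S`, events `E`, a partial transition
function and an initial state. -/
structure TS (S E : Type) where
  delta : S → E → Option S
  init : S

/-- A `τ`-region of a transition system. -/
structure Region (τ : Set Interaction) {S E : Type} (A : TS S E) where
  sup : S → Bool
  sig : E → Interaction
  sig_mem : ∀ e : E, sig e ∈ τ
  consistent : ∀ (s : S) (e : E) (s' : S), A.delta s e = some s' →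
    (sig e).apply (sup s) = some (sup s')

/-- The state separation property. -/
def SSP (τ : Set Interaction) {S E : Type} (A : TS S E) : Prop :=
  ∀ s s' : S, s ≠ s' → ∃ R : Region τ A, R.sup s ≠ R.sup s'

/-- The event state separation property. -/
def ESSP (τ : Set Interaction) {S E : Type} (A : TS S E) : Prop :=
  ∀ (s : S) (e : E), A.delta s e = none →
    ∃ R : Region τ A, (R.sig e).apply (R.sup s) = none

/-- `τ`-feasibility: both the `τ`-SSP and the `τ`-ESSP. -/
def Feasible (τ : Set Interaction) {S E : Type} (A : TS S E) : Prop :=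
  SSP τ A ∧ ESSP τ A

/-- A union of transition systems with pairwise disjoint states (disjointness is
enforced by the sigma type of states) over a common event alphabet. -/
def Union (ι : Type) (S : ι → Type) (E : Type) : Type := (i : ι) → TS (S i) E

/-- A `τ`-region of a union: its restriction to every component is a region. -/
structure URegion (τ : Set Interaction) {ι : Type} {S : ι → Type} {E : Type}
    (U : Union ι S E) where
  sup : (Σ i : ι, S i) → Bool
  sig : E → Interaction
  sig_mem : ∀ e : E, sig e ∈ τ
  consistent : ∀ (i : ι) (s : S i) (e : E) (s' : S i), (U i).delta s e = some s' →
    (sig e).apply (sup ⟨i, s⟩) = some (sup ⟨i, s'⟩)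

/-- SSP for unions: distinct states of a common component are separable. -/
def USSP (τ : Set Interaction) {ι : Type} {S : ι → Type} {E : Type}
    (U : Union ι S E) : Prop :=
  ∀ (i : ι) (s s' : S i), s ≠ s' → ∃ R : URegion τ U, R.sup ⟨i, s⟩ ≠ R.sup ⟨i, s'⟩

/-- ESSP for unions: every event is inhibitable at every state where it does not occur. -/
def UESSP (τ : Set Interaction) {ι : Type} {S : ι → Type} {E : Type}
    (U : Union ι S E) : Prop :=
  ∀ (e : E) (i : ι) (s : S i), (U i).delta s e = none →
    ∃ R : URegion τ U, (R.sig e).apply (R.sup ⟨i, s⟩) = none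

/-- The type of nets `{nop, set, swap, free}`, i.e. the single member of `σ1`. -/
def tau1 : Set Interaction :=
  {Interaction.nop, Interaction.set, Interaction.swap, Interaction.free}

/-- Membership in `σ2 = { {nop, set, swap, used} ∪ ω : ω ⊆ {res, free} }`. -/
def sigma2mem (τ : Set Interaction) : Prop :=
  ∃ ω : Set Interaction, ω ⊆ {Interaction.res, Interaction.free} ∧
    τ = ({Interaction.nop, Interaction.set, Interaction.swap, Interaction.used} :
      Set Interaction) ∪ ω

/-- Direction of an edge of a chain-shaped transition system. -/
inductive Dir : Type
  | fwd | bwd | both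
  deriving DecidableEq

def Dir.allowsFwd : Dir → Bool
  | .fwd => true
  | .both => true
  | .bwd => false

def Dir.allowsBwd : Dir → Bool
  | .bwd => true
  | .both => true
  | .fwd => false

def echk {E : Type} [DecidableEq E] (o : Option (E × Dir)) (e : E) (fwd : Bool) : Bool :=
  match o with
  | none => false
  | some (e', d) => decide (e' = e) && (if fwd then d.allowsFwd else d.allowsBwd)

/-- Transition function of a chain with edge specification `spec`:
`spec[t] = (e, d)` means an edge between states `t` and `t + 1` labelled `e`
with direction `d` (forward, backward or both). -/
def chainDelta {E : Type} [DecidableEq E] (spec : List (E × Dir)) (s : ℕ) (e : E) :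
    Option ℕ :=
  if echk spec[s]? e true = true then some (s + 1)
  else if s ≠ 0 ∧ echk spec[s - 1]? e false = true then some (s - 1)
  else none

/-- A chain-shaped transition system with `n + 1` states whose initial state is
the last state of the chain. -/
def chainTS {E : Type} [DecidableEq E] (n : ℕ) (spec : List (E × Dir)) :
    TS (Fin (n + 1)) E where
  init := Fin.last n
  delta := fun s e => (chainDelta spec s.val e).bind fun r =>
    if h : r < n + 1 then some ⟨r, h⟩ else none

/-- Index set of the gadget transition systems of `U^σ_φ`. -/
inductive GIdx (m : ℕ) : Type
  | H : Fin (4 * m) → GIdx m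
  | F0 : GIdx m
  | F1 : GIdx m
  | F2 : GIdx m
  | G : Fin m → GIdx m
  | D : Fin (3 * m) → GIdx m
  | T0 : Fin m → GIdx m
  | T1 : Fin m → GIdx m
  | T2 : Fin m → GIdx m
  | T3 : Fin m → GIdx m
  deriving DecidableEq, Fintype

/-- Events of the gadgets of `U^σ_φ`; `u g` is the unique fresh event of gadget `g`
and `x vv` is the event of the variable `vv` of `φ`. -/
inductive GEvent (V : Type) (m : ℕ) : Type
  | k : GEvent V m
  | mev : GEvent V m
  | z : GEvent V m
  | q : Fin 4 → GEvent V m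
  | v : Fin (4 * m) → GEvent V m
  | w : Fin m → GEvent V m
  | y : Fin m → GEvent V m
  | p : Fin (3 * m) → GEvent V m
  | a : Fin (3 * m) → GEvent V m
  | x : V → GEvent V m
  | u : GIdx m → GEvent V m
  deriving DecidableEq

/-- State spaces of the gadget transition systems. -/
def GS (m : ℕ) : GIdx m → Type
  | .H _ => Fin 6
  | .F0 => Fin 9
  | .F1 => Fin 6
  | .F2 => Fin 10
  | .G _ => Fin 9
  | .D _ => Fin 9
  | .T0 _ => Fin 18
  | .T1 _ => Fin 5
  | .T2 _ => Fin 5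
  | .T3 _ => Fin 5

def fmul4 {m : ℕ} (i : Fin m) (o : Fin 4) : Fin (4 * m) :=
  ⟨4 * i.val + o.val, by have h1 := i.isLt; have h2 := o.isLt; omega⟩

def fmul3 {m : ℕ} (i : Fin m) (o : Fin 3) : Fin (3 * m) :=
  ⟨3 * i.val + o.val, by have h1 := i.isLt; have h2 := o.isLt; omega⟩

/-- The union `U^σ_φ` for a cubic monotone 3-CNF `φ` given by its clauses
`X : Fin m → Fin 3 → V`.  For `b = false` this is `U^{σ1}_φ`, for `b = true`
it is `U^{σ2}_φ` (in which the events `v_{4i}` and `w_i` of `T_{i,0}` are exchanged). -/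
def gadget {V : Type} [DecidableEq V] (m : ℕ) (X : Fin m → Fin 3 → V) (b : Bool) :
    Union (GIdx m) (GS m) (GEvent V m) := fun idx =>
  match idx with
  | .H j => chainTS 5
      [(.k, .both), (.mev, .both), (.v j, .both), (.k, .both), (.u (.H j), .both)]
  | .F0 => chainTS 8
      [(.k, .both), (.mev, .both), (.q 0, .both), (.k, .both), (.mev, .both),
       (.q 1, .both), (.k, .both), (.u .F0, .both)]
  | .F1 => chainTS 5
      [(.k, .both), (.q 2, .both), (.q 3, .both), (.k, .both), (.u .F1, .both)]
  | .F2 => chainTS 9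
      [(.k, .both), (.q 2, .both), (.q 0, .both), (.z, .both), (.q 1, .both),
       (.z, .both), (.q 3, .both), (.k, .both), (.u .F2, .both)]
  | .G j => chainTS 8
      [(.k, .both), (.y j, .both), (.z, .fwd), (.z, .both), (.y j, .both),
       (.w j, .both), (.k, .both), (.u (.G j), .both)]
  | .D l => chainTS 8
      [(.k, .both), (.p l, .both), (.z, .fwd), (.z, .both), (.p l, .both),
       (.a l, .both), (.k, .both), (.u (.D l), .both)]
  | .T0 i => chainTS 17
      [(.k, .both),
       ((if b then .w i else .v (fmul4 i 0)), .both),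
       (.a (fmul3 i 0), .both),
       (.x (X i 0), .both),
       (.x (X i 0), .bwd),
       (.a (fmul3 i 0), .both),
       (.a (fmul3 i 1), .both),
       (.x (X i 1), .both),
       (.x (X i 1), .bwd),
       (.a (fmul3 i 1), .both),
       (.a (fmul3 i 2), .both),
       (.x (X i 2), .both),
       (.x (X i 2), .bwd),
       (.a (fmul3 i 2), .both),
       ((if b then .v (fmul4 i 0) else .w i), .both),
       (.k, .both),
       (.u (.T0 i), .both)]
  | .T1 i => chainTS 4
      [(.x (X i 0), .both), (.v (fmul4 i 1), .both), (.x (X i 1), .both),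
       (.u (.T1 i), .both)]
  | .T2 i => chainTS 4
      [(.x (X i 0), .both), (.v (fmul4 i 2), .both), (.x (X i 2), .both),
       (.u (.T2 i), .both)]
  | .T3 i => chainTS 4
      [(.x (X i 1), .both), (.v (fmul4 i 3), .both), (.x (X i 2), .both),
       (.u (.T3 i), .both)]

/-- `φ` is a cubic monotone 3-CNF: the three variables of every clause are
pairwise distinct, and every variable occurs in exactly three clauses. -/
def Cubic {V : Type} [Fintype V] [DecidableEq V] (m : ℕ) (X : Fin m → Fin 3 → V) : Prop :=
  (∀ i : Fin m, Function.Injective (X i)) ∧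
  ∀ vv : V, (Finset.univ.filter (fun pr : Fin m × Fin 3 => X pr.1 pr.2 = vv)).card = 3

/-- `M` is a one-in-three model of `φ`: it contains exactly one variable of
every clause. -/
def OneInThree {V : Type} (m : ℕ) (X : Fin m → Fin 3 → V) (M : Set V) : Prop :=
  ∀ i : Fin m, ∃! r : Fin 3, X i r ∈ M

def hidx {m : ℕ} (hm : 0 < m) : Fin (4 * m) := ⟨0, by omega⟩

/-- The state `h_{0,2}` of the gadget `H_0`. -/
def h02 {m : ℕ} (hm : 0 < m) : Σ i : GIdx m, GS m i := ⟨GIdx.H (hidx hm), (2 : Fin 6)⟩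

/-! ### Templates: the chains with local event names -/

/-- Local names for the events on a chain.  Within one chain there is at most one event of each of
the families `v`, `w`, `y`, `p` and at most three of the families `a` and `x`, so these finitely many
names suffice to describe every chain. -/
inductive Code : Type
  | k | mev | z | q (i : Fin 4) | v | w | y | p | a (r : Fin 3) | x (r : Fin 3) | u
  deriving DecidableEq

/-- The ten shapes of chains. -/
inductive Kind : Type
  | H | F0 | F1 | F2 | G | D | T0 | T1 | T2 | T3
  deriving DecidableEq

/-- The edges of a chain of the given shape, written with local event names. -/
def tmpl : Kind → List (Code × Dir)
  | .H => [(.k, .both), (.mev, .both), (.v, .both), (.k, .both), (.u, .both)]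
  | .F0 => [(.k, .both), (.mev, .both), (.q 0, .both), (.k, .both), (.mev, .both),
       (.q 1, .both), (.k, .both), (.u, .both)]
  | .F1 => [(.k, .both), (.q 2, .both), (.q 3, .both), (.k, .both), (.u, .both)]
  | .F2 => [(.k, .both), (.q 2, .both), (.q 0, .both), (.z, .both), (.q 1, .both),
       (.z, .both), (.q 3, .both), (.k, .both), (.u, .both)]
  | .G => [(.k, .both), (.y, .both), (.z, .fwd), (.z, .both), (.y, .both),
       (.w, .both), (.k, .both), (.u, .both)]
  | .D => [(.k, .both), (.p, .both), (.z, .fwd), (.z, .both), (.p, .both),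
       (.a 0, .both), (.k, .both), (.u, .both)]
  | .T0 => [(.k, .both), (.w, .both),
       (.a 0, .both), (.x 0, .both), (.x 0, .bwd), (.a 0, .both),
       (.a 1, .both), (.x 1, .both), (.x 1, .bwd), (.a 1, .both),
       (.a 2, .both), (.x 2, .both), (.x 2, .bwd), (.a 2, .both),
       (.v, .both), (.k, .both), (.u, .both)]
  | .T1 => [(.x 0, .both), (.v, .both), (.x 1, .both), (.u, .both)]
  | .T2 => [(.x 0, .both), (.v, .both), (.x 2, .both), (.u, .both)]
  | .T3 => [(.x 1, .both), (.v, .both), (.x 2, .both), (.u, .both)]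

/-- The local events occurring on a chain of the given shape. -/
def codes (kd : Kind) : List Code := (tmpl kd).map Prod.fst

/-- The shape of a gadget. -/
def kind {m : ℕ} : GIdx m → Kind
  | .H _ => .H
  | .F0 => .F0
  | .F1 => .F1
  | .F2 => .F2
  | .G _ => .G
  | .D _ => .D
  | .T0 _ => .T0
  | .T1 _ => .T1
  | .T2 _ => .T2
  | .T3 _ => .T3

/-- The global event denoted by a local name in a gadget.  Names without a meaning on a
chain get the junk value `k`; only names in `codes (kind g)` are ever considered. -/
def ev {V : Type} {m : ℕ} (X : Fin m → Fin 3 → V) : GIdx m → Code → GEvent V m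
  | _, .k => .k
  | _, .mev => .mev
  | _, .z => .z
  | _, .q i => .q i
  | g, .u => .u g
  | .H j, .v => .v j
  | .T0 i, .v => .v (fmul4 i 0)
  | .T1 i, .v => .v (fmul4 i 1)
  | .T2 i, .v => .v (fmul4 i 2)
  | .T3 i, .v => .v (fmul4 i 3)
  | .G j, .w => .w j
  | .T0 i, .w => .w i
  | .G j, .y => .y j
  | .D l, .p => .p l
  | .D l, .a _ => .a l
  | .T0 i, .a r => .a (fmul3 i r)
  | .T0 i, .x r => .x (X i r)
  | .T1 i, .x r => .x (X i r)
  | .T2 i, .x r => .x (X i r)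
  | .T3 i, .x r => .x (X i r)
  | _, _ => .k

/-- The position of a state on its chain. -/
def pos {m : ℕ} : (g : GIdx m) → GS m g → ℕ
  | .H _, s => Fin.val (n := 6) s
  | .F0, s => Fin.val (n := 9) s
  | .F1, s => Fin.val (n := 6) s
  | .F2, s => Fin.val (n := 10) s
  | .G _, s => Fin.val (n := 9) s
  | .D _, s => Fin.val (n := 9) s
  | .T0 _, s => Fin.val (n := 18) s
  | .T1 _, s => Fin.val (n := 5) s
  | .T2 _, s => Fin.val (n := 5) s
  | .T3 _, s => Fin.val (n := 5) s

lemma pos_inj {m : ℕ} (g : GIdx m) {s s' : GS m g} (h : pos g s = pos g s') : s = s' := by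
  cases g <;> exact Fin.ext h

lemma pos_le {m : ℕ} (g : GIdx m) (s : GS m g) : pos g s ≤ (tmpl (kind g)).length := by
  cases g <;> exact Nat.lt_succ_iff.mp (Fin.isLt (n := _) s)

lemma fmul3_inj {m : ℕ} {i i' : Fin m} {r r' : Fin 3} :
    fmul3 i r = fmul3 i' r' ↔ i = i' ∧ r = r' := by
  constructor
  · intro h
    have h0 : 3 * i.val + r.val = 3 * i'.val + r'.val := congrArg Fin.val h
    constructor <;> apply Fin.ext <;> omega
  · rintro ⟨rfl, rfl⟩
    rfl

lemma exists_fmul3 {m : ℕ} (l : Fin (3 * m)) : ∃ i r, l = fmul3 i r :=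
  ⟨⟨l.val / 3, by omega⟩, ⟨l.val % 3, by omega⟩, Fin.ext (by simp only [fmul3]; omega)⟩

/-- Distinct names occurring on a chain denote distinct events; for the names `x r` this uses that
the variables of a clause are pairwise distinct. -/
lemma ev_inj {V : Type} {m : ℕ} {X : Fin m → Fin 3 → V} (hX : ∀ i, Function.Injective (X i))
    (g : GIdx m) {c c' : Code} (hc : c ∈ codes (kind g)) (hc' : c' ∈ codes (kind g))
    (h : ev X g c = ev X g c') : c = c' := by
  cases g <;> simp only [kind, codes, tmpl, List.map_cons, List.map_nil, List.mem_cons,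
    List.not_mem_nil, or_false] at hc hc' <;> cases c <;> (try simp at hc) <;>
    cases c' <;> (try simp at hc') <;>
    first
    | rfl
    | (simp only [ev, reduceCtorEq] at h; done)
    | (simp only [ev, GEvent.x.injEq, (hX _).eq_iff] at h; rw [h])
    | (simp only [ev, GEvent.a.injEq, fmul3_inj, true_and] at h; rw [h])
    | (simp only [ev, GEvent.q.injEq] at h; rw [h])
    | (rw [hc, hc'])

/-! ### Patterns: chainwise descriptions of regions -/

/-- The interactions common to all types in `σ2`. -/
inductive Act : Type
  | nop | set | swap | used
  deriving DecidableEq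

/-- The interaction denoted by an element of `Act`. -/
def Act.toI : Act → Interaction
  | .nop => .nop
  | .set => .set
  | .swap => .swap
  | .used => .used

lemma Act.toI_mem {τ : Set Interaction} (hτ : sigma2mem τ) (a : Act) : a.toI ∈ τ := by
  obtain ⟨ω, -, rfl⟩ := hτ
  cases a <;> simp [Act.toI]

/-- Consistency of an interaction with an edge of direction `d` whose left and right end have the
support values `b` and `b'` respectively. -/
def edgeOK (a : Act) (d : Dir) (b b' : Bool) : Bool :=
  (!d.allowsFwd || decide (a.toI.apply b = some b')) &&
    (!d.allowsBwd || decide (a.toI.apply b' = some b))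

/-- Consistency of a signature with support values `f` along the chain of the gadget `g`. -/
def Ok {V : Type} {m : ℕ} (X : Fin m → Fin 3 → V) (sig : GEvent V m → Act) (f : ℕ → Bool)
    (g : GIdx m) : Prop :=
  ∀ t c d, (tmpl (kind g))[t]? = some (c, d) →
    edgeOK (sig (ev X g c)) d (f t) (f (t + 1)) = true

/-- Consistency of a signature of local names with support values `f` along a chain, as a
computable check. -/
def okB (L : Code → Act) (f : ℕ → Bool) (kd : Kind) : Bool :=
  (tmpl kd).zipIdx.all fun e => edgeOK (L e.1.1) e.1.2 (f e.2) (f (e.2 + 1))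

lemma mem_codes {kd : Kind} {t : ℕ} {c : Code} {d : Dir} (h : (tmpl kd)[t]? = some (c, d)) :
    c ∈ codes kd :=
  List.mem_map.mpr ⟨(c, d), List.mem_of_getElem? h, rfl⟩

lemma ok_local {V : Type} {m : ℕ} {X : Fin m → Fin 3 → V} {sig : GEvent V m → Act} {f : ℕ → Bool}
    {g : GIdx m} (L : Code → Act) (hL : ∀ c ∈ codes (kind g), sig (ev X g c) = L c)
    (h : okB L f (kind g) = true) : Ok X sig f g := by
  intro t c d ht
  rw [hL c (mem_codes ht)]
  have := List.all_eq_true.mp h ((c, d), t) (List.mem_zipIdx_iff_getElem?.mpr ht)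
  exact this

lemma ok_ones {V : Type} {m : ℕ} {X : Fin m → Fin 3 → V} {sig : GEvent V m → Act} {f : ℕ → Bool}
    {g : GIdx m} (hf : ∀ t, f t = true) (h : ∀ c ∈ codes (kind g), sig (ev X g c) ≠ .swap) :
    Ok X sig f g := by
  intro t c d ht
  have := h c (mem_codes ht)
  rw [hf, hf]
  revert this
  generalize sig (ev X g c) = a
  revert a d
  intro d _ a
  cases a <;> cases d <;> decide

/-- A region of `U^{σ2}_φ` that only uses the interactions common to all types in `σ2`, with the
support given by positions on the chains. -/
structure Pattern {V : Type} {m : ℕ} (X : Fin m → Fin 3 → V) where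
  sig : GEvent V m → Act
  sup : GIdx m → ℕ → Bool
  ok : ∀ g, Ok X sig (sup g) g

section Chain

variable {V : Type} [DecidableEq V] {m : ℕ} {X : Fin m → Fin 3 → V}

/-- The template of `g`, with local names replaced by global events. -/
def spec (X : Fin m → Fin 3 → V) (g : GIdx m) : List (GEvent V m × Dir) :=
  (tmpl (kind g)).map fun e => (ev X g e.1, e.2)

lemma chain_step {E : Type} [DecidableEq E] {n : ℕ} {sp : List (E × Dir)} {s s' : Fin (n + 1)}
    {e : E} (h : (chainTS n sp).delta s e = some s') :
    (∃ d : Dir, sp[s.val]? = some (e, d) ∧ d.allowsFwd = true ∧ s'.val = s.val + 1) ∨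
    (∃ d : Dir, sp[s'.val]? = some (e, d) ∧ d.allowsBwd = true ∧ s.val = s'.val + 1) := by
  simp only [chainTS, chainDelta, Option.bind_eq_some_iff] at h
  obtain ⟨r, hr, h⟩ := h
  split_ifs at h with hlt
  obtain rfl := Option.some.inj h
  split_ifs at hr with h1 h2
  · left
    obtain rfl := Option.some.inj hr
    rcases hs : sp[s.val]? with _ | ⟨e', d⟩
    · simp [echk, hs] at h1
    · simp only [echk, hs, Bool.and_eq_true, decide_eq_true_eq, if_true] at h1
      exact ⟨d, by rw [h1.1], h1.2, rfl⟩
  · right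
    obtain ⟨h0, h2⟩ := h2
    obtain rfl := Option.some.inj hr
    rcases hs : sp[s.val - 1]? with _ | ⟨e', d⟩
    · simp [echk, hs] at h2
    · simp only [echk, hs, Bool.and_eq_true, decide_eq_true_eq, Bool.false_eq_true, if_false] at h2
      exact ⟨d, by simp [h2.1], h2.2, by simp only; omega⟩

lemma chain_none {E : Type} [DecidableEq E] {n : ℕ} {sp : List (E × Dir)} (hn : sp.length = n)
    {s : Fin (n + 1)} {e : E} (h : (chainTS n sp).delta s e = none) :
    (echk sp[s.val]? e true || (decide (s.val ≠ 0) && echk sp[s.val - 1]? e false)) = false := by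
  by_contra hcon
  simp only [Bool.not_eq_false, Bool.or_eq_true, Bool.and_eq_true, decide_eq_true_eq] at hcon
  simp only [chainTS, chainDelta, Option.bind_eq_none_iff] at h
  by_cases h1 : echk sp[s.val]? e true = true
  · have hlt : s.val < sp.length := by
      by_contra hge
      rw [List.getElem?_eq_none (by omega)] at h1
      simp [echk] at h1
    have := h (s.val + 1) (by rw [if_pos h1])
    rw [dif_pos (by omega)] at this
    exact absurd this (by simp)
  · have h2 := hcon.resolve_left h1
    have := h (s.val - 1) (by rw [if_neg h1, if_pos h2])
    rw [dif_pos (by omega)] at this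
    exact absurd this (by simp)

lemma gadget_step {g : GIdx m} {s s' : GS m g} {e : GEvent V m}
    (h : (gadget m X true g).delta s e = some s') :
    (∃ d : Dir, (spec X g)[pos g s]? = some (e, d) ∧ d.allowsFwd = true ∧
      pos g s' = pos g s + 1) ∨
    (∃ d : Dir, (spec X g)[pos g s']? = some (e, d) ∧ d.allowsBwd = true ∧
      pos g s = pos g s' + 1) := by
  cases g <;> exact chain_step h

/-- Whether the local event `c` occurs at position `s` of a chain. -/
def en (kd : Kind) (c : Code) (s : ℕ) : Bool :=
  echk (tmpl kd)[s]? c true || (decide (s ≠ 0) && echk (tmpl kd)[s - 1]? c false)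

lemma echk_map {E E' : Type} [DecidableEq E] [DecidableEq E'] (φ : E → E') (o : Option (E × Dir))
    (c : E) (b : Bool) (h : echk o c b = true) :
    echk (o.map fun e => (φ e.1, e.2)) (φ c) b = true := by
  rcases o with _ | ⟨c', d⟩
  · simp [echk] at h
  · simp only [echk, Bool.and_eq_true, decide_eq_true_eq, Option.map_some] at h ⊢
    exact ⟨by rw [h.1], h.2⟩

lemma gadget_none {g : GIdx m} {s : GS m g} {c : Code}
    (h : (gadget m X true g).delta s (ev X g c) = none) : en (kind g) c (pos g s) = false := by
  have key : (echk (spec X g)[pos g s]? (ev X g c) true || (decide (pos g s ≠ 0) &&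
      echk (spec X g)[pos g s - 1]? (ev X g c) false)) = false := by
    cases g <;> exact chain_none rfl h
  by_contra hcon
  rw [Bool.eq_false_iff] at key
  apply key
  simp only [en, Bool.not_eq_false, Bool.or_eq_true, Bool.and_eq_true, spec,
    List.getElem?_map] at hcon ⊢
  exact hcon.imp (echk_map _ _ _ _) (fun h => ⟨h.1, echk_map _ _ _ _ h.2⟩)

/-- The region of `U^{σ2}_φ` described by a pattern. -/
def Pattern.toRegion (P : Pattern X) {τ : Set Interaction} (hτ : sigma2mem τ) :
    URegion τ (gadget m X true) where
  sup := fun x => P.sup x.1 (pos x.1 x.2)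
  sig := fun e => (P.sig e).toI
  sig_mem := fun e => Act.toI_mem hτ _
  consistent := by
    intro g s e s' h
    rcases gadget_step h with ⟨d, h1, h2, h3⟩ | ⟨d, h1, h2, h3⟩ <;>
    · simp only [spec, List.getElem?_map, Option.map_eq_some_iff, Prod.mk.injEq] at h1
      obtain ⟨⟨c, d'⟩, h4, rfl, rfl⟩ := h1
      have := P.ok g _ c d' h4
      simp only [edgeOK, h2, Bool.not_true, Bool.false_or, Bool.and_eq_true,
        decide_eq_true_eq] at this
      simp only [h3, this]

lemma Pattern.inhibits (P : Pattern X) {τ : Set Interaction} (hτ : sigma2mem τ) {e : GEvent V m}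
    {g : GIdx m} {s : GS m g} (he : P.sig e = .used) (hs : P.sup g (pos g s) = false) :
    ∃ R : URegion τ (gadget m X true), (R.sig e).apply (R.sup ⟨g, s⟩) = none :=
  ⟨P.toRegion hτ, by simp [Pattern.toRegion, he, hs, Act.toI, Interaction.apply]⟩

end Chain

/-! ### Regions built from `swap` and `nop` -/

/-- The parity of the number of edges with a label in `S` among the first `t` edges of a chain. -/
def par (S : Code → Bool) (kd : Kind) (t : ℕ) : Bool :=
  (((tmpl kd).take t).countP fun e => S e.1) % 2 == 1

lemma par_succ (S : Code → Bool) {kd : Kind} {t : ℕ} {c : Code} {d : Dir}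
    (h : (tmpl kd)[t]? = some (c, d)) : par S kd (t + 1) = xor (par S kd t) (S c) := by
  simp only [par, List.take_add_one, h, Option.toList_some, List.countP_append,
    List.countP_singleton]
  generalize List.countP _ _ = n
  rcases Nat.mod_two_eq_zero_or_one n with hn | hn <;> cases S c <;> simp [Nat.add_mod, hn]

lemma par_congr {S S' : Code → Bool} {kd : Kind} (h : ∀ c ∈ codes kd, S c = S' c) (t : ℕ) :
    par S kd t = par S' kd t := by
  have : ((tmpl kd).take t).countP (fun e => S e.1) = ((tmpl kd).take t).countP fun e => S' e.1 := by
    apply List.countP_congr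
    intro e he
    rw [h e.1 (List.mem_map.mpr ⟨e, List.mem_of_mem_take he, rfl⟩)]
  simp only [par, this]

section Swap

variable {V : Type} [DecidableEq V] {m : ℕ} {X : Fin m → Fin 3 → V}

/-- Chains are acyclic, so every set `S` of swapped events extends to a region whose support along
each chain alternates exactly at the edges labelled in `S`, with value `1` at a prescribed position
`p g`.  If all occurrences of an event `E` have the same parity as `p g`, then `E` may be signed
`used`. -/
def swapPattern (X : Fin m → Fin 3 → V) (S : GEvent V m → Bool) (E : GEvent V m) (hE : S E = false)
    (p : GIdx m → ℕ)
    (hp : ∀ g (t : ℕ) c d, (tmpl (kind g))[t]? = some (c, d) → ev X g c = E →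
      par (fun c => S (ev X g c)) (kind g) t = par (fun c => S (ev X g c)) (kind g) (p g)) :
    Pattern X where
  sig := fun e => if e = E then .used else if S e then .swap else .nop
  sup := fun g t => par (fun c => S (ev X g c)) (kind g) t ==
    par (fun c => S (ev X g c)) (kind g) (p g)
  ok := by
    intro g t c d ht
    beta_reduce
    rw [par_succ _ ht]
    by_cases hc : ev X g c = E
    · rw [hp g t c d ht hc, hc, hE]
      generalize par _ _ _ = b
      cases b <;> cases d <;> simp <;> decide
    · rw [if_neg hc]
      generalize par _ _ t = b
      generalize par _ _ (p g) = b'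
      cases S (ev X g c) <;> cases b <;> cases b' <;> cases d <;> decide

lemma swap_inhibits {τ : Set Interaction} (hτ : sigma2mem τ) (S : GEvent V m → Bool)
    {g : GIdx m} {c : Code} {s : GS m g} {t : ℕ} {d : Dir} (hS : S (ev X g c) = false)
    (hconst : ∀ g' (t₁ t₂ : ℕ) c₁ d₁ c₂ d₂, (tmpl (kind g'))[t₁]? = some (c₁, d₁) →
      (tmpl (kind g'))[t₂]? = some (c₂, d₂) → ev X g' c₁ = ev X g c → ev X g' c₂ = ev X g c →
      par (fun c => S (ev X g' c)) (kind g') t₁ = par (fun c => S (ev X g' c)) (kind g') t₂)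
    (ht : (tmpl (kind g))[t]? = some (c, d))
    (hne : par (fun c => S (ev X g c)) (kind g) (pos g s) ≠
      par (fun c => S (ev X g c)) (kind g) t) :
    ∃ R : URegion τ (gadget m X true), (R.sig (ev X g c)).apply (R.sup ⟨g, s⟩) = none := by
  have hp : ∀ g', ∃ p : ℕ, ∀ (t : ℕ) (c' : Code) (d : Dir),
      (tmpl (kind g'))[t]? = some (c', d) → ev X g' c' = ev X g c →
      par (fun c => S (ev X g' c)) (kind g') t = par (fun c => S (ev X g' c)) (kind g') p := by
    intro g'
    by_cases h : ∃ (t : ℕ) (c' : Code) (d : Dir),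
        (tmpl (kind g'))[t]? = some (c', d) ∧ ev X g' c' = ev X g c
    · obtain ⟨p, c₂, d₂, h1, h2⟩ := h
      exact ⟨p, fun t c₁ d₁ h3 h4 => hconst g' t p c₁ d₁ c₂ d₂ h3 h1 h4 h2⟩
    · exact ⟨0, fun t c₁ d₁ h3 h4 => absurd ⟨t, c₁, d₁, h3, h4⟩ h⟩
  choose p hp using hp
  refine (swapPattern X S _ hS p hp).inhibits hτ (if_pos rfl) ?_
  have h0 := hp g t c d ht rfl
  simp only [swapPattern, ← h0]
  simpa using hne

/-- An event is inhibited at every state of every chain on which it does not occur. -/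
lemma absent_inhibits {τ : Set Interaction} (hτ : sigma2mem τ) {E : GEvent V m} {g : GIdx m}
    {s : GS m g} (h : ∀ c ∈ codes (kind g), ev X g c ≠ E) :
    ∃ R : URegion τ (gadget m X true), (R.sig E).apply (R.sup ⟨g, s⟩) = none := by
  let P : Pattern X :=
    { sig := fun e => if e = E then .used else .nop
      sup := fun g' _ => decide (g' ≠ g)
      ok := by
        intro g' t c d ht
        by_cases hg : g' = g
        · subst hg
          beta_reduce
          rw [if_neg (h c (mem_codes ht))]
          cases d <;> simp <;> decide
        · by_cases hc : ev X g' c = E <;> cases d <;> simp [hc, hg] <;> decide }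
  exact P.inhibits hτ (if_pos rfl) (by simp [P])

end Swap

/-- Pairs `(c, f)` of events such that swapping `f` alone does not force different support values at
two occurrences of `c` on a common chain. -/
def safe : Code → Code → Bool
  | .k, .y => true
  | .k, .p => true
  | .k, .u => true
  | .k, _ => false
  | .mev, .k => false
  | .mev, .q i => decide (i ≠ 0)
  | .z, .q i => decide (i ≠ 1)
  | _, _ => true

/-- The counterpart of `safe` for global events. -/
def gsafe {V : Type} {m : ℕ} : GEvent V m → GEvent V m → Bool
  | .k, .y _ => true
  | .k, .p _ => true
  | .k, .u _ => true
  | .k, _ => false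
  | .mev, .k => false
  | .mev, .q i => decide (i ≠ 0)
  | .z, .q i => decide (i ≠ 1)
  | _, _ => true

lemma gsafe_ev {V : Type} {m : ℕ} {X : Fin m → Fin 3 → V} (g : GIdx m)
    {c f : Code} (hc : c ∈ codes (kind g)) (hf : f ∈ codes (kind g)) :
    gsafe (ev X g c) (ev X g f) = safe c f := by
  cases g <;> simp only [kind, codes, tmpl, List.map_cons, List.map_nil, List.mem_cons,
    List.not_mem_nil, or_false] at hc hf <;> cases c <;> (try simp at hc) <;>
    cases f <;> (try simp at hf) <;> rfl

lemma safe_const (kd : Kind) : ∀ t₁ < (tmpl kd).length, ∀ t₂ < (tmpl kd).length,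
    ∀ f ∈ codes kd, ∀ e₁ ∈ (tmpl kd)[t₁]?, ∀ e₂ ∈ (tmpl kd)[t₂]?, e₁.1 = e₂.1 → e₁.1 ≠ f →
      safe e₁.1 f = true →
        par (fun c => decide (c = f)) kd t₁ = par (fun c => decide (c = f)) kd t₂ := by
  cases kd <;> decide +kernel

section Single

variable {V : Type} [DecidableEq V] {m : ℕ} {X : Fin m → Fin 3 → V}

lemma par_none {S : Code → Bool} {kd : Kind} (h : ∀ c ∈ codes kd, S c = false) (t : ℕ) :
    par S kd t = false := by
  rw [par_congr (S' := fun _ => false) h]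
  simp [par]

lemma par_ev (hX : ∀ i, Function.Injective (X i)) {g : GIdx m} {f : Code}
    (hf : f ∈ codes (kind g)) (t : ℕ) :
    par (fun c => decide (ev X g c = ev X g f)) (kind g) t =
      par (fun c => decide (c = f)) (kind g) t := by
  apply par_congr
  intro c hc
  exact decide_eq_decide.mpr ⟨ev_inj hX g hc hf, fun h => by rw [h]⟩

/-- Swapping a single event `f` inhibits `c` at every position separated from an occurrence of `c`
by an odd number of occurrences of `f`, provided the pair is safe. -/
lemma single_inhibits (hX : ∀ i, Function.Injective (X i)) {τ : Set Interaction}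
    (hτ : sigma2mem τ) {g : GIdx m} {c f : Code} {s : GS m g} {t : ℕ} {d : Dir}
    (hf : f ∈ codes (kind g)) (hfc : f ≠ c) (hs : safe c f = true)
    (ht : (tmpl (kind g))[t]? = some (c, d))
    (hne : par (fun c => decide (c = f)) (kind g) (pos g s) ≠
      par (fun c => decide (c = f)) (kind g) t) :
    ∃ R : URegion τ (gadget m X true), (R.sig (ev X g c)).apply (R.sup ⟨g, s⟩) = none := by
  have hc := mem_codes ht
  refine swap_inhibits hτ (fun e => decide (e = ev X g f)) (t := t) (d := d) ?_ ?_ ht ?_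
  · exact decide_eq_false fun h => hfc (ev_inj hX g hc hf h).symm
  · intro g' t₁ t₂ c₁ d₁ c₂ d₂ h₁ h₂ he₁ he₂
    by_cases hF : ∃ f' ∈ codes (kind g'), ev X g' f' = ev X g f
    · obtain ⟨f', hf', hff⟩ := hF
      have hcc := ev_inj hX g' (mem_codes h₁) (mem_codes h₂) (he₁.trans he₂.symm)
      simp only [← hff]
      rw [par_ev hX hf', par_ev hX hf']
      refine safe_const _ t₁ (List.getElem?_eq_some_iff.mp h₁).1 t₂
        (List.getElem?_eq_some_iff.mp h₂).1 f' hf' _ h₁ _ h₂ hcc ?_ ?_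
      · rintro rfl
        exact hfc (ev_inj hX g hf hc (hff.symm.trans he₁))
      · rw [← gsafe_ev (X := X) g' (mem_codes h₁) hf', he₁, hff, gsafe_ev g hc hf, hs]
    · rw [par_none, par_none] <;> intro c' hc' <;>
        exact decide_eq_false fun h => hF ⟨c', hc', h⟩
  · rw [par_ev hX hf, par_ev hX hf]
    exact hne

/-- Two states of a chain separated by an odd number of occurrences of `f` are separated by the
region that swaps `f`. -/
lemma single_separates (hX : ∀ i, Function.Injective (X i)) {τ : Set Interaction}
    (hτ : sigma2mem τ) {g : GIdx m} {f : Code} {s s' : GS m g} (hf : f ∈ codes (kind g))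
    (hne : par (fun c => decide (c = f)) (kind g) (pos g s) ≠
      par (fun c => decide (c = f)) (kind g) (pos g s')) :
    ∃ R : URegion τ (gadget m X true), R.sup ⟨g, s⟩ ≠ R.sup ⟨g, s'⟩ := by
  let P : Pattern X :=
    { sig := fun e => if e = ev X g f then .swap else .nop
      sup := fun g' t => par (fun c => decide (ev X g' c = ev X g f)) (kind g') t
      ok := by
        intro g' t c d ht
        beta_reduce
        rw [par_succ _ ht]
        generalize par _ _ t = b
        by_cases hc : ev X g' c = ev X g f <;> simp only [hc, if_true, if_false, decide_true,
          decide_false] <;> cases b <;> cases d <;> decide }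
  refine ⟨P.toRegion hτ, ?_⟩
  simp only [Pattern.toRegion, P]
  rw [par_ev hX hf, par_ev hX hf]
  exact hne

/-- The event `m` is inhibited by swapping `k` and `q_0` simultaneously. -/
lemma mev_inhibits {τ : Set Interaction} (hτ : sigma2mem τ) {g : GIdx m} {s : GS m g} {t : ℕ}
    {d : Dir} (ht : (tmpl (kind g))[t]? = some (.mev, d))
    (hne : par (fun c => decide (c = .k ∨ c = .q 0)) (kind g) (pos g s) ≠
      par (fun c => decide (c = .k ∨ c = .q 0)) (kind g) t) :
    ∃ R : URegion τ (gadget m X true), (R.sig .mev).apply (R.sup ⟨g, s⟩) = none := by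
  have key : ∀ (g : GIdx m) (t : ℕ),
      par (fun c => decide (ev X g c = .k ∨ ev X g c = .q 0)) (kind g) t =
        par (fun c => decide (c = .k ∨ c = .q 0)) (kind g) t := by
    intro g t
    apply par_congr
    intro c hc
    apply decide_eq_decide.mpr
    cases g <;> simp only [kind, codes, tmpl, List.map_cons, List.map_nil, List.mem_cons,
      List.not_mem_nil, or_false] at hc <;> cases c <;> (try simp at hc) <;> simp [ev]
  have hev : ∀ (g : GIdx m), ∀ c ∈ codes (kind g), ev X g c = .mev → c = .mev := by
    intro g c hc
    cases g <;> simp only [kind, codes, tmpl, List.map_cons, List.map_nil, List.mem_cons,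
      List.not_mem_nil, or_false] at hc <;> cases c <;> (try simp at hc) <;> simp [ev]
  have hconst : ∀ kd : Kind, ∀ t₁ < (tmpl kd).length, ∀ t₂ < (tmpl kd).length,
      ∀ e₁ ∈ (tmpl kd)[t₁]?, ∀ e₂ ∈ (tmpl kd)[t₂]?, e₁.1 = .mev → e₂.1 = .mev →
      par (fun c => decide (c = .k ∨ c = .q 0)) kd t₁ =
        par (fun c => decide (c = .k ∨ c = .q 0)) kd t₂ := by
    intro kd
    cases kd <;> decide +kernel
  refine swap_inhibits (c := .mev) hτ (fun e => decide (e = .k ∨ e = .q 0)) (t := t) (d := d)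
    (by simp [ev]) ?_ ht ?_
  · intro g' t₁ t₂ c₁ d₁ c₂ d₂ h₁ h₂ he₁ he₂
    rw [key, key]
    exact hconst _ t₁ (List.getElem?_eq_some_iff.mp h₁).1 t₂
        (List.getElem?_eq_some_iff.mp h₂).1 _ h₁ _ h₂ (hev _ _ (mem_codes h₁) he₁)
        (hev _ _ (mem_codes h₂) he₂)
  · rw [key, key]
    exact hne

end Single

/-! ### The combinatorics of the templates -/

set_option synthInstance.maxHeartbeats 400000 in
set_option synthInstance.maxSize 2000 in
/-- Whenever a local event `c` does not occur at position `s` of a chain on which it occurs elsewhere,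
one of the families of regions applies.  In the order of the disjuncts: swapping one event, swapping
`k` and `q_0`, `keyPattern`, `qPattern`, `gPattern`, `dPattern`, `zPattern`, `dropPattern`,
`risePattern`. -/
lemma essp_cases (kd : Kind) : ∀ c ∈ codes kd, ∀ s < (tmpl kd).length + 1, en kd c s = false →
    (∃ f ∈ codes kd, f ≠ c ∧ safe c f = true ∧ ∃ e ∈ (tmpl kd).zipIdx,
      e.1.1 = c ∧ par (fun c => decide (c = f)) kd s ≠ par (fun c => decide (c = f)) kd e.2) ∨
    (c = .mev ∧ ∃ e ∈ (tmpl kd).zipIdx, e.1.1 = c ∧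
      par (fun c => decide (c = .k ∨ c = .q 0)) kd s ≠
        par (fun c => decide (c = .k ∨ c = .q 0)) kd e.2) ∨
    (c = .k ∧ (kd = .H ∧ s = 2 ∨ kd = .F0 ∧ (s = 2 ∨ s = 5) ∨ kd = .T0 ∧ s = 14)) ∨
    (c = .k ∧ (kd = .F1 ∧ s = 2 ∨ kd = .F2 ∧ 2 ≤ s ∧ s ≤ 6)) ∨
    (c = .k ∧ (kd = .G ∧ s = 5 ∨ kd = .T0 ∧ 2 ≤ s ∧ s ≤ 10)) ∨
    (c = .k ∧ (kd = .D ∧ s = 5 ∨ kd = .T0 ∧ 11 ≤ s ∧ s ≤ 13)) ∨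
    ((kd = .D ∧ c = .a 0 ∨ kd = .G ∧ c = .w) ∧ s ≤ 2) ∨
    (kd = .T0 ∧ ∃ r : Fin 3, (c = .w ∨ ∃ r' : Fin 3, r' < r ∧ c = .a r') ∧ 5 + 4 * r.val ≤ s) ∨
    (kd = .T0 ∧ ∃ r : Fin 3, (c = .v ∨ ∃ r' : Fin 3, r < r' ∧ c = .a r') ∧ s ≤ 2 + 4 * r.val) := by
  cases kd <;> decide +kernel

/-- Any two positions of a chain are separated by swapping one event, or by `dropPattern`, or by
`zPattern`. -/
lemma ssp_cases (kd : Kind) : ∀ s < (tmpl kd).length + 1, ∀ s' < s,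
    (∃ f ∈ codes kd, par (fun c => decide (c = f)) kd s ≠ par (fun c => decide (c = f)) kd s') ∨
    (kd = .T0 ∧ ∃ r : Fin 3, s' ≤ 4 + 4 * r.val ∧ 5 + 4 * r.val ≤ s) ∨
    ((kd = .D ∨ kd = .G) ∧ s' ≤ 2 ∧ 3 ≤ s) := by
  cases kd <;> decide +kernel

/-! ### Regions that use `set` -/

section SetRegions

variable {V : Type} {m : ℕ} {X : Fin m → Fin 3 → V}

lemma ev_eq_a {g : GIdx m} {c : Code} {l : Fin (3 * m)} (hc : c ∈ codes (kind g))
    (h : ev X g c = .a l) : g = .D l ∨ ∃ i r, g = .T0 i ∧ l = fmul3 i r := by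
  cases g <;> simp only [kind, codes, tmpl, List.map_cons, List.map_nil, List.mem_cons,
    List.not_mem_nil, or_false] at hc <;> cases c <;> simp [ev] at hc h ⊢
  · exact h
  · exact ⟨_, h.symm⟩

lemma ev_eq_p {g : GIdx m} {c : Code} {l : Fin (3 * m)} (h : ev X g c = .p l) : g = .D l := by
  cases g <;> cases c <;> simp [ev] at h ⊢
  exact h

lemma ev_eq_y {g : GIdx m} {c : Code} {j : Fin m} (h : ev X g c = .y j) : g = .G j := by
  cases g <;> cases c <;> simp [ev] at h ⊢
  exact h

lemma ev_eq_w {g : GIdx m} {c : Code} {j : Fin m} (h : ev X g c = .w j) :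
    g = .G j ∨ g = .T0 j := by
  cases g <;> cases c <;> simp [ev] at h ⊢ <;> exact h

lemma ev_eq_q {g : GIdx m} {c : Code} {i : Fin 4} (hc : c ∈ codes (kind g))
    (h : ev X g c = .q i) (hi : i = 2 ∨ i = 3) : g = .F1 ∨ g = .F2 := by
  cases g <;> simp only [kind, codes, tmpl, List.map_cons, List.map_nil, List.mem_cons,
    List.not_mem_nil, or_false] at hc <;> cases c <;> simp [ev] at hc h ⊢
  rcases hi with rfl | rfl <;> subst h <;> simp at hc

lemma ev_iff (hX : ∀ i, Function.Injective (X i)) (g : GIdx m) {c c' : Code}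
    (hc : c ∈ codes (kind g)) (hc' : c' ∈ codes (kind g)) : ev X g c = ev X g c' ↔ c = c' :=
  ⟨ev_inj hX g hc hc', fun h => by rw [h]⟩

variable [DecidableEq V]

/-- With `X_{i,r}` signed `set`, the support on `T_{i,0}` drops from `1` to `0` across the one-way edge
labelled `X_{i,r}`; on all other chains it is `1`.  The event `c`, which precedes that edge on
`T_{i,0}`, is signed `used`. -/
def dropPattern (hX : ∀ i, Function.Injective (X i)) (i : Fin m) (r : Fin 3) (c : Code)
    (hc : c = .w ∨ ∃ r' : Fin 3, r' < r ∧ c = .a r') : Pattern X where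
  sig := fun e => if e = ev X (.T0 i) c then .used else if e = .x (X i r) then .set else .nop
  sup := fun g t => decide (g = .T0 i → t ≤ 4 + 4 * r.val)
  ok := by
    intro g
    by_cases hg : g = .T0 i
    · subst hg
      have hmem : c ∈ codes .T0 := by
        rcases hc with rfl | ⟨r', -, rfl⟩
        · decide
        · exact (by decide : ∀ r : Fin 3, Code.a r ∈ codes .T0) r'
      have hr : Code.x r ∈ codes .T0 := (by decide : ∀ r : Fin 3, Code.x r ∈ codes .T0) r
      refine ok_local (fun c' => if c' = c then .used else if c' = .x r then .set else .nop) ?_ ?_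
      · intro c' hc'
        have h1 := ev_iff hX (.T0 i) hc' hmem
        have h2 := ev_iff hX (.T0 i) hc' hr
        have h3 : ev X (.T0 i) (.x r) = .x (X i r) := rfl
        simp only [h1, ← h3, h2]
      · simp only [forall_const, kind]
        clear hmem hr
        rcases hc with rfl | ⟨r', hlt, rfl⟩
        · revert r; decide
        · revert r r'; decide +kernel
    · refine ok_ones (fun t => by simp [hg]) (fun c' _ => ?_)
      split_ifs <;> simp

/-- With `X_{i,r}` signed `set` and `a_{3i+r}` signed `swap`, the support on `T_{i,0}` rises from `0`
to `1` along the block of `X_{i,r}`.  The event `c`, which follows that block on `T_{i,0}`, is signed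
`used`. -/
def risePattern (hX : ∀ i, Function.Injective (X i)) (i : Fin m) (r : Fin 3) (c : Code)
    (hc : c = .v ∨ ∃ r' : Fin 3, r < r' ∧ c = .a r') : Pattern X where
  sig := fun e => if e = ev X (.T0 i) c then .used else if e = .x (X i r) then .set else
    if e = .a (fmul3 i r) then .swap else .nop
  sup := fun g t => if g = .T0 i then decide (2 + 4 * r.val < t ∧ t ≠ 5 + 4 * r.val) else
    if g = .D (fmul3 i r) then decide (6 ≤ t) else true
  ok := by
    intro g
    by_cases hg : g = .T0 i
    · subst hg
      have hmem : c ∈ codes .T0 := by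
        rcases hc with rfl | ⟨r', -, rfl⟩
        · decide
        · exact (by decide : ∀ r : Fin 3, Code.a r ∈ codes .T0) r'
      have hr : Code.x r ∈ codes .T0 := (by decide : ∀ r : Fin 3, Code.x r ∈ codes .T0) r
      have ha : Code.a r ∈ codes .T0 := (by decide : ∀ r : Fin 3, Code.a r ∈ codes .T0) r
      refine ok_local (fun c' => if c' = c then .used else if c' = .x r then .set else
        if c' = .a r then .swap else .nop) ?_ ?_
      · intro c' hc'
        have h1 := ev_iff hX (.T0 i) hc' hmem
        have h2 := ev_iff hX (.T0 i) hc' hr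
        have h3 : ev X (.T0 i) (.x r) = .x (X i r) := rfl
        have h4 := ev_iff hX (.T0 i) hc' ha
        have h5 : ev X (.T0 i) (.a r) = .a (fmul3 i r) := rfl
        simp only [h1, ← h3, h2, ← h5, h4]
      · simp only [if_true, kind]
        clear hmem hr ha
        rcases hc with rfl | ⟨r', hlt, rfl⟩
        · revert r; decide
        · revert r r'; decide +kernel
    · by_cases hg' : g = .D (fmul3 i r)
      · subst hg'
        refine ok_local (fun c' => if c' = .a 0 then .swap else .nop) ?_ ?_
        · rcases hc with rfl | ⟨r', hlt, rfl⟩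
          · simp [kind, codes, tmpl, ev]
          · simp [kind, codes, tmpl, ev, fmul3_inj, hlt.ne]
        · simp only [if_true, reduceCtorEq, if_false, kind]
          decide
      · refine ok_ones (fun t => by simp [hg, hg']) (fun c' hc' => ?_)
        split_ifs with h1 h2 h3 <;> simp
        rcases ev_eq_a hc' h3 with h | ⟨i', r', h, h'⟩
        · exact hg' h
        · rw [fmul3_inj] at h'
          exact hg (by rw [h, h'.1])

/-- With `z` signed `set`, the support on a single chain `G_j` or `D_ℓ` rises from `0` to `1` at the
one-way edge labelled `z`, while it is `1` on all other chains. -/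
def zPattern (hX : ∀ i, Function.Injective (X i)) (g₀ : GIdx m) (c : Code)
    (hc : kind g₀ = .D ∧ c = .a 0 ∨ kind g₀ = .G ∧ c = .w) : Pattern X where
  sig := fun e => if e = ev X g₀ c then .used else if e = .z then .set else .nop
  sup := fun g t => decide (g = g₀ → 3 ≤ t)
  ok := by
    intro g
    by_cases hg : g = g₀
    · subst hg
      have hmem : c ∈ codes (kind g) := by
        rcases hc with ⟨h, rfl⟩ | ⟨h, rfl⟩ <;> rw [h] <;> decide
      have hz : Code.z ∈ codes (kind g) := by
        rcases hc with ⟨h, rfl⟩ | ⟨h, rfl⟩ <;> rw [h] <;> decide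
      refine ok_local (fun c' => if c' = c then .used else if c' = .z then .set else .nop) ?_ ?_
      · intro c' hc'
        have h1 := ev_iff hX g hc' hmem
        have h2 := ev_iff hX g hc' hz
        have h3 : ev X g .z = .z := by cases g <;> rfl
        simp only [h1, ← h3, h2]
      · simp only [forall_const]
        rcases hc with ⟨h, rfl⟩ | ⟨h, rfl⟩ <;> rw [h] <;> decide
    · refine ok_ones (fun t => by simp [hg]) (fun c' _ => ?_)
      split_ifs <;> simp

/-! ### Regions inhibiting `k` -/

/-- The region for `k` whose support vanishes strictly between the edges labelled `q_2` and `q_3` of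
`F_1` and `F_2`, obtained by swapping these two events. -/
def qPattern (X : Fin m → Fin 3 → V) : Pattern X where
  sig := fun e => if e = .k then .used else if e = .q 2 ∨ e = .q 3 then .swap else .nop
  sup := fun g t => if g = .F1 then decide (t ≠ 2) else
    if g = .F2 then decide (t < 2 ∨ 6 < t) else true
  ok := by
    intro g
    by_cases hg : g = .F1
    · subst hg
      refine ok_local (fun c => if c = .k then .used else
        if c = .q 2 ∨ c = .q 3 then .swap else .nop) ?_ ?_
      · simp [kind, codes, tmpl, ev]
      · simp only [if_true, kind]
        decide
    · by_cases hg' : g = .F2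
      · subst hg'
        refine ok_local (fun c => if c = .k then .used else
          if c = .q 2 ∨ c = .q 3 then .swap else .nop) ?_ ?_
        · simp [kind, codes, tmpl, ev]
        · simp only [if_true, reduceCtorEq, if_false, kind]
          decide
      · refine ok_ones (fun t => by simp [hg, hg']) (fun c' hc' => ?_)
        split_ifs with h1 h2 <;> simp
        rcases h2 with h2 | h2
        · exact (ev_eq_q hc' h2 (by simp)).elim hg hg'
        · exact (ev_eq_q hc' h2 (by simp)).elim hg hg'

/-- The region for `k` whose support vanishes on `d_{ℓ,2}` and `d_{ℓ,5}`, `ℓ = 3i + r`, and on the block of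
`X_{i,r}` in `T_{i,0}`. -/
def dPattern (X : Fin m → Fin 3 → V) (i : Fin m) (r : Fin 3) : Pattern X where
  sig := fun e => if e = .k then .used else if e = .z then .set else
    if e = .a (fmul3 i r) ∨ e = .p (fmul3 i r) then .swap else .nop
  sup := fun g t => if g = .T0 i then decide (t < 3 + 4 * r.val ∨ 5 + 4 * r.val < t) else
    if g = .D (fmul3 i r) then decide (t ≠ 2 ∧ t ≠ 5) else true
  ok := by
    intro g
    by_cases hg : g = .T0 i
    · subst hg
      refine ok_local (fun c => if c = .k then .used else if c = .a r then .swap else .nop) ?_ ?_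
      · simp [kind, codes, tmpl, ev, fmul3_inj]
      · simp only [if_true, kind]
        revert r; decide
    · by_cases hg' : g = .D (fmul3 i r)
      · subst hg'
        refine ok_local (fun c => if c = .k then .used else if c = .z then .set else
          if c = .a 0 ∨ c = .p then .swap else .nop) ?_ ?_
        · simp [kind, codes, tmpl, ev]
        · simp only [if_true, reduceCtorEq, if_false, kind]
          decide
      · refine ok_ones (fun t => by simp [hg, hg']) (fun c' hc' => ?_)
        split_ifs with h1 h2 h3 <;> simp
        rcases h3 with h3 | h3
        · rcases ev_eq_a hc' h3 with h | ⟨i', r', h, h'⟩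
          · exact hg' h
          · rw [fmul3_inj] at h'
            exact hg (by rw [h, h'.1])
        · exact hg' (ev_eq_p h3)

/-- The region for `k` whose support vanishes on `g_{j,5}` and on the states `t_{j,0,2}`, …,
`t_{j,0,10}`: the value drops at `w_j` and is raised again along the block of `X_{j,2}`. -/
def gPattern (hX : ∀ i, Function.Injective (X i)) (j : Fin m) : Pattern X where
  sig := fun e => if e = .k then .used else if e = .z ∨ e = .x (X j 2) then .set else
    if e = .a (fmul3 j 2) ∨ e = .p (fmul3 j 2) ∨ e = .w j ∨ e = .y j then .swap else .nop
  sup := fun g t => if g = .T0 j then decide ((t < 2 ∨ 10 < t) ∧ t ≠ 13) else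
    if g = .D (fmul3 j 2) ∨ g = .G j then decide (t ≠ 2 ∧ t ≠ 5) else true
  ok := by
    intro g
    by_cases hg : g = .T0 j
    · subst hg
      refine ok_local (fun c => if c = .k then .used else if c = .x 2 then .set else
        if c = .a 2 ∨ c = .w then .swap else .nop) ?_ ?_
      · simp [kind, codes, tmpl, ev, fmul3_inj, (hX j).eq_iff]
      · simp only [if_true, kind]
        decide
    · by_cases hg' : g = .D (fmul3 j 2) ∨ g = .G j
      · have hL : okB (fun c => if c = .k then .used else if c = .z then .set else
            if c = .a 0 ∨ c = .p ∨ c = .w ∨ c = .y then .swap else .nop)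
            (fun t => decide (t ≠ 2 ∧ t ≠ 5)) (kind g) = true := by
          rcases hg' with rfl | rfl <;> simp only [kind] <;> decide
        simp only [hg, hg', if_true, if_false]
        refine ok_local _ ?_ hL
        rcases hg' with rfl | rfl <;> simp [kind, codes, tmpl, ev]
      · refine ok_ones (fun t => by simp only [hg, hg', if_false]) (fun c' hc' => ?_)
        split_ifs with h1 h2 h3 <;> simp
        rcases h3 with h3 | h3 | h3 | h3
        · rcases ev_eq_a hc' h3 with h | ⟨i', r', h, h'⟩
          · exact hg' (Or.inl h)
          · rw [fmul3_inj] at h'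
            exact hg (by rw [h, h'.1])
        · exact hg' (Or.inl (ev_eq_p h3))
        · exact (ev_eq_w h3).elim (fun h => hg' (Or.inr h)) hg
        · exact hg' (Or.inr (ev_eq_y h3))

open Classical in
/-- The signature given by a one-in-three model `M`: the variables of the model are signed `set`. -/
noncomputable def keySig (M : Set V) : GEvent V m → Act
  | .k => .used
  | .mev => .swap
  | .v _ => .swap
  | .q i => if i = 0 ∨ i = 1 then .swap else .nop
  | .x vv => if vv ∈ M then .set else .nop
  | _ => .nop

/-- The local form of `keySig` on the chains of a clause whose model variable has index `r`. -/
def keyL (r : Fin 3) : Code → Act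
  | .k => .used
  | .mev => .swap
  | .v => .swap
  | .q i => if i = 0 ∨ i = 1 then .swap else .nop
  | .x r' => if r' = r then .set else .nop
  | _ => .nop

/-- The support belonging to `keySig`, for chains of a clause whose model variable has index `r`.  On
`T_{i,0}` it drops from `1` to `0` along the block of that variable and is restored by `v_{4i}`. -/
def keySup (r : Fin 3) : Kind → ℕ → Bool
  | .H, t => decide (t ≠ 2)
  | .F0, t => decide (t ≠ 2 ∧ t ≠ 5)
  | .F2, t => decide (t ≠ 3 ∧ t ≠ 4)
  | .T0, t => decide (t ≤ 4 + 4 * r.val ∨ 15 ≤ t)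
  | .T1, t => decide (r = 1 ↔ 2 ≤ t)
  | .T2, t => decide (r = 2 ↔ 2 ≤ t)
  | .T3, t => decide (r = 2 ↔ 2 ≤ t)
  | _, _ => true

/-- The index of the model variable of the clause to which a gadget belongs; gadgets
outside `T_{i,0}`, …, `T_{i,3}` have no variable events and get the value `0`. -/
def clauseIdx (r : Fin m → Fin 3) : GIdx m → Fin 3
  | .T0 i => r i
  | .T1 i => r i
  | .T2 i => r i
  | .T3 i => r i
  | _ => 0

/-- The signature and support obtained from the model are consistent on every chain, wherever the
model variable stands in its clause. -/
lemma keyL_ok (r : Fin 3) (kd : Kind) : okB (keyL r) (keySup r kd) kd = true := by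
  revert r
  cases kd <;> decide +kernel

/-- The region inhibiting `k` obtained from a one-in-three model. -/
noncomputable def keyPattern (M : Set V) (r : Fin m → Fin 3)
    (hr : ∀ i r', X i r' ∈ M ↔ r' = r i) : Pattern X where
  sig := keySig M
  sup := fun g t => keySup (clauseIdx r g) (kind g) t
  ok := by
    intro g
    refine ok_local (keyL (clauseIdx r g)) ?_ (keyL_ok _ _)
    cases g <;> simp [kind, codes, tmpl, ev, keySig, keyL, hr, clauseIdx] <;>
      (repeat' apply And.intro) <;> congr

end SetRegions

/-! ### Assembling the regions -/

section Assembly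

variable {V : Type} [DecidableEq V] {m : ℕ} {X : Fin m → Fin 3 → V}

lemma uessp_of_model {M : Set V} {r : Fin m → Fin 3} (hX : ∀ i, Function.Injective (X i))
    (hr : ∀ i r', X i r' ∈ M ↔ r' = r i) {τ : Set Interaction} (hτ : sigma2mem τ) :
    UESSP τ (gadget m X true) := by
  intro e g s hnone
  by_cases hex : ∃ c ∈ codes (kind g), ev X g c = e
  swap
  · exact absent_inhibits hτ fun c hc h => hex ⟨c, hc, h⟩
  obtain ⟨c, hc, rfl⟩ := hex
  have hk : ev X g .k = .k := by cases g <;> rfl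
  rcases essp_cases (kind g) c hc (pos g s) (Nat.lt_succ_of_le (pos_le g s)) (gadget_none hnone)
    with ⟨f, hf, hfc, hs, ⟨⟨c', d⟩, t⟩, he, rfl, hne⟩ | ⟨rfl, ⟨⟨c', d⟩, t⟩, he, rfl, hne⟩ |
      ⟨rfl, h⟩ | ⟨rfl, h⟩ | ⟨rfl, h⟩ | ⟨rfl, h⟩ | ⟨h, hs⟩ | ⟨hg, r₀, h, hs⟩ | ⟨hg, r₀, h, hs⟩
  · exact single_inhibits hX hτ hf hfc hs (List.mem_zipIdx_iff_getElem?.mp he) hne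
  · have hm : ev X g .mev = .mev := by cases g <;> rfl
    rw [hm]
    exact mev_inhibits hτ (List.mem_zipIdx_iff_getElem?.mp he) hne
  · rw [hk]
    refine (keyPattern M r hr).inhibits hτ rfl ?_
    simp only [keyPattern]
    generalize pos g s = t at h ⊢
    generalize clauseIdx r g = r'
    rcases h with ⟨hg, rfl⟩ | ⟨hg, rfl | rfl⟩ | ⟨hg, rfl⟩ <;> rw [hg] <;> revert r' <;> decide
  · rw [hk]
    refine (qPattern X).inhibits hτ (by simp [qPattern]) ?_
    simp only [qPattern]
    generalize pos g s = t at h ⊢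
    cases g <;> simp [kind] at h ⊢ <;> omega
  · rw [hk]
    cases g <;> simp only [kind, reduceCtorEq, false_and, or_false, false_or, true_and] at h
    case G j =>
      exact (gPattern hX j).inhibits hτ (by simp [gPattern]) (by simp [gPattern, h])
    case T0 i =>
      refine (gPattern hX i).inhibits hτ (by simp [gPattern]) ?_
      simp [gPattern]
      omega
  · rw [hk]
    cases g <;> simp only [kind, reduceCtorEq, false_and, or_false, false_or, true_and] at h
    case D l =>
      obtain ⟨i, r', rfl⟩ := exists_fmul3 l
      exact (dPattern X i r').inhibits hτ (by simp [dPattern]) (by simp [dPattern, h])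
    case T0 i =>
      refine (dPattern X i 2).inhibits hτ (by simp [dPattern]) ?_
      simp [dPattern]
      omega
  · exact (zPattern hX g c h).inhibits hτ (if_pos rfl) (by simp [zPattern]; omega)
  · cases g <;> simp only [kind, reduceCtorEq] at hg
    case T0 i =>
      exact (dropPattern hX i r₀ c h).inhibits hτ (if_pos rfl) (by simp [dropPattern]; omega)
  · cases g <;> simp only [kind, reduceCtorEq] at hg
    case T0 i =>
      exact (risePattern hX i r₀ c h).inhibits hτ (if_pos rfl) (by simp [risePattern]; omega)

lemma ussp_gadgets (hX : ∀ i, Function.Injective (X i)) {τ : Set Interaction} (hτ : sigma2mem τ) :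
    USSP τ (gadget m X true) := by
  have key : ∀ g (s s' : GS m g), pos g s' < pos g s →
      ∃ R : URegion τ (gadget m X true), R.sup ⟨g, s⟩ ≠ R.sup ⟨g, s'⟩ := by
    intro g s s' hlt
    rcases ssp_cases (kind g) (pos g s) (Nat.lt_succ_of_le (pos_le g s)) (pos g s') hlt
      with ⟨f, hf, hne⟩ | ⟨hg, r, h, h'⟩ | ⟨hg, h, h'⟩
    · exact single_separates hX hτ hf hne
    · cases g <;> simp only [kind, reduceCtorEq] at hg
      case T0 i =>
        refine ⟨(dropPattern hX i r .w (Or.inl rfl)).toRegion hτ, ?_⟩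
        simp [Pattern.toRegion, dropPattern]
        omega
    · obtain ⟨c, hc⟩ : ∃ c : Code, kind g = .D ∧ c = .a 0 ∨ kind g = .G ∧ c = .w :=
        hg.elim (fun hg => ⟨_, Or.inl ⟨hg, rfl⟩⟩) (fun hg => ⟨_, Or.inr ⟨hg, rfl⟩⟩)
      refine ⟨(zPattern hX g c hc).toRegion hτ, ?_⟩
      simp [Pattern.toRegion, zPattern]
      omega
  intro g s s' hne
  rcases lt_or_gt_of_ne fun h => hne (pos_inj g h) with h | h
  · obtain ⟨R, hR⟩ := key g s' s h
    exact ⟨R, hR.symm⟩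
  · exact key g s s' h

end Assembly

/-- If `φ` has a one-in-three model, then for every `τ ∈ σ2` the
union `U^{σ2}_φ` has the `τ`-ESSP and the `τ`-SSP. -/
theorem sigma2_model_implies_essp_ssp {V : Type} [Fintype V] [DecidableEq V]
    (m : ℕ) (hm : 0 < m) (X : Fin m → Fin 3 → V) (hφ : Cubic m X)
    (hM : ∃ M : Set V, OneInThree m X M) :
    ∀ τ : Set Interaction, sigma2mem τ →
      UESSP τ (gadget m X true) ∧ USSP τ (gadget m X true) := by
  intro τ hτ
  obtain ⟨M, hM⟩ := hM
  choose r hr using hM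
  exact ⟨uessp_of_model hφ.1 (M := M) (r := r)
    (fun i r' => ⟨fun h => (hr i).2 r' h, fun h => h ▸ (hr i).1⟩) hτ, ussp_gadgets hφ.1 hτ⟩

end PetriNets
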